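/- arXiv:2503.02406 — 2 statements merged into one kernel-verified Lean document; each statement's English description precedes it below -/
import Mathlib

section
/- Let n ≥ 0, s ≥ 0 and ψ ∈ [0,π] with (s,ψ) ≠ (2,0). Let z, v ∈ ℂ^{n+1} satisfy |z| = 1, |v| = 1, Re⟨z,v⟩ = 0 and Re⟨i·z, v⟩ = cos ψ, and define w₀ := (1/(2i|C_s(ψ)|))·(i(|C_s(ψ)| + s/2)·z − v) and w₁ := (1/(2i|C_s(ψ)|))·(i(|C_s(ψ)| − s/2)·z + v). Then: (i) ⟨w₀,w₁⟩ = 0 and |w₀|² + |w₁|² = 1, so (w₀,w₁) is admissible; (ii) |w₁|² − |w₀|² = cos(Arg(C_s(ψ))); (iii) w₀ + w₁ = z; and (iv) the curve γ(t) := e^{i s t/2}·(e^{−i|C_s(ψ)|t}·w₀ + e^{i|C_s(ψ)|t}·w₁) satisfies γ(0) = z, γ'(0) = v and γ''(t) − i·s·γ'(t) + (1 − s·cos ψ)·γ(t) = 0 for all t. In particular, the unit-speed magnetic geodesic of strength s with initial condition (z,v) is contained in the Clifford torus 𝕋²_{w₀,w₁}, whose width is Arg(C_s(ψ)) up to the identification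 τ ∼ π − τ. -/
noncomputable section

open scoped Real

/-- Hermitian product on `ℂ^{n+1}`, ℂ-linear in the first argument and
conjugate-linear in the second (paper convention). -/
def herm {n : ℕ} (x y : EuclideanSpace ℂ (Fin (n + 1))) : ℂ := inner ℂ y x

/-- Norm of the point `C_s(ψ) = (−s/2 + cos ψ, sin ψ) ∈ ℝ²`, i.e.
`|C_s(ψ)| = sqrt(s²/4 + 1 − s cos ψ)`. -/
def normC (s ψ : ℝ) : ℝ := Real.sqrt (s ^ 2 / 4 + 1 - s * Real.cos ψ)

/-- Angle of `C_s(ψ)` with the positive x-axis: the unique `τ ∈ [0,π]` with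
`cos τ = (−s/2 + cos ψ)/|C_s(ψ)|`. -/
def argC (s ψ : ℝ) : ℝ := Real.arccos ((-s / 2 + Real.cos ψ) / normC s ψ)

/-- `γ` is a unit-speed magnetic geodesic of strength `s` with contact angle `ψ`,
in the paper's ambient-space formulation: `γ'' − i·s·γ' + (1 − s·cos ψ)·γ = 0`,
`|γ(0)| = 1`, `|γ'(0)| = 1`, `Re⟨γ(0),γ'(0)⟩ = 0`, `Re⟨i·γ(0),γ'(0)⟩ = cos ψ`. -/
def IsMagGeo {n : ℕ} (s ψ : ℝ) (γ : ℝ → EuclideanSpace ℂ (Fin (n + 1))) : Prop :=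
  ContDiff ℝ (⊤ : ℕ∞) γ ∧
  (∀ t : ℝ, deriv (deriv γ) t - ((s : ℂ) * Complex.I) • deriv γ t
      + ((1 : ℂ) - (s : ℂ) * (Real.cos ψ : ℂ)) • γ t = 0) ∧
  ‖γ 0‖ = 1 ∧ ‖deriv γ 0‖ = 1 ∧ (herm (γ 0) (deriv γ 0)).re = 0 ∧
  (herm (Complex.I • γ 0) (deriv γ 0)).re = Real.cos ψ

/-- The curve `γ(t) = e^{i s t/2}(e^{−i|C_s(ψ)|t} w₀ + e^{i|C_s(ψ)|t} w₁)`. -/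
def magCurve {n : ℕ} (s ψ : ℝ) (w₀ w₁ : EuclideanSpace ℂ (Fin (n + 1))) (t : ℝ) :
    EuclideanSpace ℂ (Fin (n + 1)) :=
  Complex.exp (Complex.I * s * t / 2) •
    (Complex.exp (-(Complex.I * normC s ψ * t)) • w₀ +
     Complex.exp (Complex.I * normC s ψ * t) • w₁)

/-- The Clifford torus `𝕋²_{w₀,w₁} = {λ₀ w₀ + λ₁ w₁ : |λ₀| = |λ₁| = 1}`. -/
def cliffordTorus {n : ℕ} (w₀ w₁ : EuclideanSpace ℂ (Fin (n + 1))) :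
    Set (EuclideanSpace ℂ (Fin (n + 1))) :=
  {x | ∃ l₀ l₁ : ℂ, ‖l₀‖ = 1 ∧ ‖l₁‖ = 1 ∧ x = l₀ • w₀ + l₁ • w₁}

/-! A curve `γ(t) = e^{iω₀t} w₀ + e^{iω₁t} w₁` solves `γ'' = i(ω₀ + ω₁) γ' + ω₀ω₁ γ`, and its
initial position `z` and velocity `v` determine `w₀ = (v - iω₁z) / i(ω₀ - ω₁)` and
`w₁ = (v - iω₀z) / i(ω₁ - ω₀)`. If `Re⟨z, v⟩ = 0` and `κ = Re⟨iz, v⟩`, the vectors `w₀, w₁` are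
orthogonal as soon as `|v|² + ω₀ω₁|z|² = (ω₀ + ω₁)κ`, and then
`|w₁|² = (κ - ω₀|z|²) / (ω₁ - ω₀)`, symmetrically for `w₀`. The magnetic geodesic equation
corresponds to `ω₀ = s/2 - |C_s(ψ)|` and `ω₁ = s/2 + |C_s(ψ)|`, for which the orthogonality
condition reads `|C_s(ψ)|² = s²/4 + 1 - s cos ψ`. -/

open Complex (I)

section TwoFrequencyCurve

variable {E : Type*} [NormedAddCommGroup E] [NormedSpace ℂ E]

/-- The superposition `t ↦ e^{iω₀t} w₀ + e^{iω₁t} w₁` of two uniform circular motions; every curve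
`magCurve s ψ w₀ w₁` is of this form. -/
def twoFrequencyCurve (ω₀ ω₁ : ℝ) (w₀ w₁ : E) (t : ℝ) : E :=
  Complex.exp (ω₀ * I * t) • w₀ + Complex.exp (ω₁ * I * t) • w₁

theorem twoFrequencyCurve_zero (ω₀ ω₁ : ℝ) (w₀ w₁ : E) :
    twoFrequencyCurve ω₀ ω₁ w₀ w₁ 0 = w₀ + w₁ := by
  simp [twoFrequencyCurve]

theorem deriv_twoFrequencyCurve (ω₀ ω₁ : ℝ) (w₀ w₁ : E) :
    deriv (twoFrequencyCurve ω₀ ω₁ w₀ w₁) =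
      twoFrequencyCurve ω₀ ω₁ ((ω₀ * I) • w₀) ((ω₁ * I) • w₁) := by
  have hasDerivAt_exp (c : ℂ) (t : ℝ) :
      HasDerivAt (fun t : ℝ ↦ Complex.exp (c * t)) (Complex.exp (c * t) * c) t := by
    simpa using ((Complex.ofRealCLM.hasDerivAt (x := t)).const_mul c).cexp
  funext t
  exact (((hasDerivAt_exp (ω₀ * I) t).smul_const w₀).add
    ((hasDerivAt_exp (ω₁ * I) t).smul_const w₁)).deriv.trans
      (by simp only [twoFrequencyCurve, mul_smul])

theorem deriv_deriv_twoFrequencyCurve (ω₀ ω₁ : ℝ) (w₀ w₁ : E) (t : ℝ) :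
    deriv (deriv (twoFrequencyCurve ω₀ ω₁ w₀ w₁)) t =
      (((ω₀ + ω₁ : ℝ) : ℂ) * I) • deriv (twoFrequencyCurve ω₀ ω₁ w₀ w₁) t +
        ((ω₀ * ω₁ : ℝ) : ℂ) • twoFrequencyCurve ω₀ ω₁ w₀ w₁ t := by
  simp only [deriv_twoFrequencyCurve, twoFrequencyCurve]
  push_cast
  match_scalars
  · linear_combination -(Complex.exp (ω₀ * I * t) * ω₀ * ω₁) * Complex.I_sq
  · linear_combination -(Complex.exp (ω₁ * I * t) * ω₀ * ω₁) * Complex.I_sq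

theorem exists_twoFrequencyCurve_eq_unit_smul_add (ω₀ ω₁ : ℝ) (w₀ w₁ : E) (t : ℝ) :
    ∃ l₀ l₁ : ℂ, ‖l₀‖ = 1 ∧ ‖l₁‖ = 1 ∧
      twoFrequencyCurve ω₀ ω₁ w₀ w₁ t = l₀ • w₀ + l₁ • w₁ :=
  ⟨_, _, by simp [Complex.norm_exp], by simp [Complex.norm_exp], rfl⟩

/-- The coefficient of `e^{iωt}` in the superposition of motions of frequencies `ω` and `ω'` that
has initial position `z` and initial velocity `v`. Only meaningful for `ω ≠ ω'`. -/
def frequencyCoeff (ω ω' : ℝ) (z v : E) : E :=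
  (((ω - ω' : ℝ) : ℂ) * I)⁻¹ • (v - (ω' * I) • z)

theorem frequencyCoeff_add_swap {ω ω' : ℝ} (h : ω ≠ ω') (z v : E) :
    frequencyCoeff ω ω' z v + frequencyCoeff ω' ω z v = z := by
  have hsub : (ω : ℂ) - ω' ≠ 0 := sub_ne_zero.2 (mod_cast h)
  have hsub' : (ω' : ℂ) - ω ≠ 0 := sub_ne_zero.2 (mod_cast h.symm)
  simp only [frequencyCoeff, Complex.ofReal_sub]
  match_scalars <;> field_simp <;> ring

theorem smul_frequencyCoeff_add_smul_swap {ω ω' : ℝ} (h : ω ≠ ω') (z v : E) :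
    (ω * I) • frequencyCoeff ω ω' z v + (ω' * I) • frequencyCoeff ω' ω z v = v := by
  have hsub : (ω : ℂ) - ω' ≠ 0 := sub_ne_zero.2 (mod_cast h)
  have hsub' : (ω' : ℂ) - ω ≠ 0 := sub_ne_zero.2 (mod_cast h.symm)
  simp only [frequencyCoeff, Complex.ofReal_sub]
  match_scalars <;> field_simp <;> ring

theorem inv_smul_sub_eq_frequencyCoeff (s C : ℝ) (z v : E) :
    (2 * I * (C : ℂ))⁻¹ • ((I * ((C : ℂ) + (s : ℂ) / 2)) • z - v) =
      frequencyCoeff (s / 2 - C) (s / 2 + C) z v := by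
  have hinv : (((s / 2 - C - (s / 2 + C) : ℝ) : ℂ) * I)⁻¹ = -(2 * I * (C : ℂ))⁻¹ := by
    rw [← inv_neg]
    push_cast
    ring_nf
  rw [frequencyCoeff, hinv]
  push_cast
  module

theorem inv_smul_add_eq_frequencyCoeff (s C : ℝ) (z v : E) :
    (2 * I * (C : ℂ))⁻¹ • ((I * ((C : ℂ) - (s : ℂ) / 2)) • z + v) =
      frequencyCoeff (s / 2 + C) (s / 2 - C) z v := by
  have hinv : (((s / 2 + C - (s / 2 - C) : ℝ) : ℂ) * I)⁻¹ = (2 * I * (C : ℂ))⁻¹ := by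
    push_cast
    ring_nf
  rw [frequencyCoeff, hinv]
  push_cast
  module

end TwoFrequencyCurve

section FrequencyCoeffInner

variable {E : Type*} [NormedAddCommGroup E] [InnerProductSpace ℂ E] {z v : E} {ω ω' : ℝ}

theorem inner_eq_neg_re_inner_I_smul_mul_I_of_re_eq_zero (h : (inner ℂ v z).re = 0) :
    inner ℂ v z = -((inner ℂ v (I • z)).re * I) := by
  apply Complex.ext <;> simp [h]

theorem inner_frequencyCoeff_swap_eq_zero (hzv : (inner ℂ v z).re = 0)
    (hω : ‖v‖ ^ 2 + ω * ω' * ‖z‖ ^ 2 = (ω + ω') * (inner ℂ v (I • z)).re) :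
    inner ℂ (frequencyCoeff ω ω' z v) (frequencyCoeff ω' ω z v) = 0 := by
  set κ := (inner ℂ v (I • z)).re
  have hvz : inner ℂ v z = -(κ * I) := inner_eq_neg_re_inner_I_smul_mul_I_of_re_eq_zero hzv
  have hvz' : inner ℂ z v = κ * I := by simp [← inner_conj_symm z v, hvz]
  have hωc : (‖v‖ : ℂ) ^ 2 + ω * ω' * (‖z‖ : ℂ) ^ 2 = (ω + ω') * κ := mod_cast hω
  have hinner : inner ℂ (v - (ω' * I) • z) (v - (ω * I) • z) = 0 := by
    simp only [inner_sub_left, inner_sub_right, inner_smul_left, inner_smul_right, hvz, hvz',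
      inner_self_eq_norm_sq_to_K, map_mul, Complex.conj_I, Complex.conj_ofReal,
      Complex.coe_algebraMap]
    linear_combination hωc + ((ω + ω') * κ - ω * ω' * (‖z‖ : ℂ) ^ 2) * Complex.I_sq
  rw [frequencyCoeff, frequencyCoeff, inner_smul_left, inner_smul_right, hinner, mul_zero, mul_zero]

theorem norm_frequencyCoeff_sq :
    ‖frequencyCoeff ω ω' z v‖ ^ 2 =
      (‖v‖ ^ 2 - 2 * ω' * (inner ℂ v (I • z)).re + ω' ^ 2 * ‖z‖ ^ 2) / (ω - ω') ^ 2 := by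
  have hinner : (inner ℂ v ((ω' * I) • z)).re = ω' * (inner ℂ v (I • z)).re := by
    rw [mul_smul, inner_smul_right, Complex.re_ofReal_mul]
  have hnorm : ‖v - (ω' * I) • z‖ ^ 2 =
      ‖v‖ ^ 2 - 2 * ω' * (inner ℂ v (I • z)).re + ω' ^ 2 * ‖z‖ ^ 2 := by
    rw [norm_sub_sq (𝕜 := ℂ), RCLike.re_eq_complex_re, hinner, norm_smul, norm_mul, Complex.norm_I,
      Complex.norm_real, mul_one, mul_pow, Real.norm_eq_abs, sq_abs]
    ring
  rw [frequencyCoeff, norm_smul, norm_inv, norm_mul, Complex.norm_I, Complex.norm_real, mul_one,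
    mul_pow, hnorm, inv_pow, Real.norm_eq_abs, sq_abs, inv_mul_eq_div]

theorem norm_frequencyCoeff_sq_of_eq (hne : ω ≠ ω')
    (hω : ‖v‖ ^ 2 + ω * ω' * ‖z‖ ^ 2 = (ω + ω') * (inner ℂ v (I • z)).re) :
    ‖frequencyCoeff ω ω' z v‖ ^ 2 =
      ((inner ℂ v (I • z)).re - ω' * ‖z‖ ^ 2) / (ω - ω') := by
  have hsub : ω - ω' ≠ 0 := sub_ne_zero.2 hne
  rw [norm_frequencyCoeff_sq, div_eq_div_iff (pow_ne_zero 2 hsub) hsub]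
  linear_combination (ω - ω') * hω

theorem norm_frequencyCoeff_sq_add_swap (hne : ω ≠ ω') (hzv : (inner ℂ v z).re = 0)
    (hω : ‖v‖ ^ 2 + ω * ω' * ‖z‖ ^ 2 = (ω + ω') * (inner ℂ v (I • z)).re) :
    ‖frequencyCoeff ω ω' z v‖ ^ 2 + ‖frequencyCoeff ω' ω z v‖ ^ 2 = ‖z‖ ^ 2 := by
  conv_rhs => rw [← frequencyCoeff_add_swap hne z v, norm_add_sq (𝕜 := ℂ),
    inner_frequencyCoeff_swap_eq_zero hzv hω, map_zero, mul_zero, add_zero]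

theorem norm_frequencyCoeff_sq_sub_swap (hne : ω ≠ ω')
    (hω : ‖v‖ ^ 2 + ω * ω' * ‖z‖ ^ 2 = (ω + ω') * (inner ℂ v (I • z)).re) :
    ‖frequencyCoeff ω ω' z v‖ ^ 2 - ‖frequencyCoeff ω' ω z v‖ ^ 2 =
      (2 * (inner ℂ v (I • z)).re - (ω + ω') * ‖z‖ ^ 2) / (ω - ω') := by
  rw [norm_frequencyCoeff_sq_of_eq hne hω,
    norm_frequencyCoeff_sq_of_eq hne.symm (by linear_combination hω), ← neg_sub ω ω', div_neg]
  ring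

end FrequencyCoeffInner

theorem normC_eq_sqrt_sq_add_sq (s ψ : ℝ) :
    normC s ψ = √((-s / 2 + Real.cos ψ) ^ 2 + Real.sin ψ ^ 2) := by
  rw [normC, Real.sin_sq]
  ring_nf

theorem normC_sq (s ψ : ℝ) : normC s ψ ^ 2 = s ^ 2 / 4 + 1 - s * Real.cos ψ := by
  rw [normC_eq_sqrt_sq_add_sq, Real.sq_sqrt (by positivity), Real.sin_sq]
  ring

theorem abs_neg_half_add_cos_le_normC (s ψ : ℝ) : |-s / 2 + Real.cos ψ| ≤ normC s ψ := by
  rw [normC_eq_sqrt_sq_add_sq]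
  exact Real.abs_le_sqrt (le_add_of_nonneg_right (sq_nonneg _))

theorem cos_argC (s ψ : ℝ) : Real.cos (argC s ψ) = (-s / 2 + Real.cos ψ) / normC s ψ := by
  have hnonneg : 0 ≤ normC s ψ := Real.sqrt_nonneg _
  have habs : |(-s / 2 + Real.cos ψ) / normC s ψ| ≤ 1 := by
    rw [abs_div, abs_of_nonneg hnonneg]
    exact div_le_one_of_le₀ (abs_neg_half_add_cos_le_normC s ψ) hnonneg
  exact Real.cos_arccos (abs_le.1 habs).1 (abs_le.1 habs).2

theorem normC_ne_zero {s ψ : ℝ} (hs : 0 ≤ s) (hψ : ψ ∈ Set.Icc 0 π) (hne : (s, ψ) ≠ (2, 0)) :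
    normC s ψ ≠ 0 := by
  intro hC
  rw [normC_eq_sqrt_sq_add_sq, Real.sqrt_eq_zero (by positivity)] at hC
  obtain ⟨hcos_sq, hsin_sq⟩ := (add_eq_zero_iff_of_nonneg (sq_nonneg _) (sq_nonneg _)).1 hC
  have hcos : -s / 2 + Real.cos ψ = 0 := pow_eq_zero_iff two_ne_zero |>.1 hcos_sq
  have hsin : Real.sin ψ = 0 := pow_eq_zero_iff two_ne_zero |>.1 hsin_sq
  have hcos_one : Real.cos ψ = 1 := by
    rcases Real.sin_eq_zero_iff_cos_eq.1 hsin with h | h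
    · exact h
    · linarith
  have hψ_zero : ψ = 0 := by rw [← Real.arccos_cos hψ.1 hψ.2, hcos_one, Real.arccos_one]
  exact hne (Prod.ext (by linarith) hψ_zero)

theorem magCurve_eq_twoFrequencyCurve {n : ℕ} (s ψ : ℝ)
    (w₀ w₁ : EuclideanSpace ℂ (Fin (n + 1))) :
    magCurve s ψ w₀ w₁ =
      twoFrequencyCurve (s / 2 - normC s ψ) (s / 2 + normC s ψ) w₀ w₁ := by
  funext t
  simp only [magCurve, twoFrequencyCurve, smul_add, smul_smul, ← Complex.exp_add]
  push_cast
  ring_nf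

section MagneticGeodesic

variable {E : Type*} [NormedAddCommGroup E] [InnerProductSpace ℂ E]

theorem stmt_2_general (s ψ : ℝ) (hC : normC s ψ ≠ 0) (z v : E)
    (hz : ‖z‖ = 1) (hv : ‖v‖ = 1) (hzv : (inner ℂ v z).re = 0)
    (hangle : (inner ℂ v (I • z)).re = Real.cos ψ) (w₀ w₁ : E)
    (hw₀ : w₀ = (2 * I * (normC s ψ : ℂ))⁻¹ •
        ((I * ((normC s ψ : ℂ) + (s : ℂ) / 2)) • z - v))
    (hw₁ : w₁ = (2 * I * (normC s ψ : ℂ))⁻¹ •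
        ((I * ((normC s ψ : ℂ) - (s : ℂ) / 2)) • z + v)) :
    let γ : ℝ → E := twoFrequencyCurve (s / 2 - normC s ψ) (s / 2 + normC s ψ) w₀ w₁
    (inner ℂ w₁ w₀ = 0 ∧ ‖w₀‖ ^ 2 + ‖w₁‖ ^ 2 = 1) ∧
    ‖w₁‖ ^ 2 - ‖w₀‖ ^ 2 = Real.cos (argC s ψ) ∧
    w₀ + w₁ = z ∧
    (γ 0 = z ∧ deriv γ 0 = v ∧
      ∀ t : ℝ, deriv (deriv γ) t - ((s : ℂ) * I) • deriv γ t
        + ((1 : ℂ) - (s : ℂ) * (Real.cos ψ : ℂ)) • γ t = 0) ∧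
    (∀ t : ℝ, ∃ l₀ l₁ : ℂ, ‖l₀‖ = 1 ∧ ‖l₁‖ = 1 ∧ γ t = l₀ • w₀ + l₁ • w₁) := by
  rw [inv_smul_sub_eq_frequencyCoeff] at hw₀
  rw [inv_smul_add_eq_frequencyCoeff] at hw₁
  have hCsq := normC_sq s ψ
  rw [cos_argC]
  set C := normC s ψ
  have hne : s / 2 + C ≠ s / 2 - C := fun h ↦ hC (by linarith)
  have hprod : (s / 2 - C) * (s / 2 + C) = s * Real.cos ψ - 1 := by linear_combination -hCsq
  have hω : ‖v‖ ^ 2 + (s / 2 + C) * (s / 2 - C) * ‖z‖ ^ 2 =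
      (s / 2 + C + (s / 2 - C)) * (inner ℂ v (I • z)).re := by
    rw [hz, hv, hangle]
    linear_combination hprod
  have hsum : w₀ + w₁ = z := by rw [hw₀, hw₁, frequencyCoeff_add_swap hne.symm]
  refine ⟨⟨?_, ?_⟩, ?_, hsum, ⟨?_, ?_, fun t ↦ ?_⟩,
    exists_twoFrequencyCurve_eq_unit_smul_add _ _ w₀ w₁⟩
  · rw [hw₀, hw₁, inner_frequencyCoeff_swap_eq_zero hzv hω]
  · rw [hw₀, hw₁, add_comm, norm_frequencyCoeff_sq_add_swap hne hzv hω, hz, one_pow]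
  · rw [hw₀, hw₁, norm_frequencyCoeff_sq_sub_swap hne hω, hangle, hz]
    field_simp
    ring
  · rw [twoFrequencyCurve_zero, hsum]
  · rw [deriv_twoFrequencyCurve, twoFrequencyCurve_zero, hw₀, hw₁,
      smul_frequencyCoeff_add_smul_swap hne.symm]
  · rw [deriv_deriv_twoFrequencyCurve, hprod, sub_add_add_cancel, add_halves]
    push_cast
    module

end MagneticGeodesic

/-- from initial data `(z,v)` on the unit sphere bundle the explicit
pair `(w₀,w₁)` is admissible, has width `Arg(C_s(ψ))`, sums to `z`, and the
associated curve solves the magnetic geodesic ODE with initial condition `(z,v)`;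
in particular the geodesic lies in the Clifford torus `𝕋²_{w₀,w₁}`. -/
theorem stmt_2 {n : ℕ} (s ψ : ℝ) (hs : 0 ≤ s) (hψ : ψ ∈ Set.Icc 0 π)
    (hne : (s, ψ) ≠ (2, 0))
    (z v : EuclideanSpace ℂ (Fin (n + 1)))
    (hz : ‖z‖ = 1) (hv : ‖v‖ = 1)
    (hzv : (herm z v).re = 0)
    (hangle : (herm (Complex.I • z) v).re = Real.cos ψ)
    (w₀ w₁ : EuclideanSpace ℂ (Fin (n + 1)))
    (hw₀ : w₀ = (2 * Complex.I * (normC s ψ : ℂ))⁻¹ •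
        ((Complex.I * ((normC s ψ : ℂ) + (s : ℂ) / 2)) • z - v))
    (hw₁ : w₁ = (2 * Complex.I * (normC s ψ : ℂ))⁻¹ •
        ((Complex.I * ((normC s ψ : ℂ) - (s : ℂ) / 2)) • z + v)) :
    (herm w₀ w₁ = 0 ∧ ‖w₀‖ ^ 2 + ‖w₁‖ ^ 2 = 1) ∧
    ‖w₁‖ ^ 2 - ‖w₀‖ ^ 2 = Real.cos (argC s ψ) ∧
    w₀ + w₁ = z ∧
    (magCurve s ψ w₀ w₁ 0 = z ∧ deriv (magCurve s ψ w₀ w₁) 0 = v ∧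
      ∀ t : ℝ, deriv (deriv (magCurve s ψ w₀ w₁)) t
        - ((s : ℂ) * Complex.I) • deriv (magCurve s ψ w₀ w₁) t
        + ((1 : ℂ) - (s : ℂ) * (Real.cos ψ : ℂ)) • magCurve s ψ w₀ w₁ t = 0) ∧
    (∀ t : ℝ, magCurve s ψ w₀ w₁ t ∈ cliffordTorus w₀ w₁) := by
  rw [magCurve_eq_twoFrequencyCurve]
  exact stmt_2_general s ψ (normC_ne_zero hs hψ hne) z v hz hv hzv hangle w₀ w₁ hw₀ hw₁
end
end

section
/- Let n ≥ 0 and 0 ≤ s < 2. Then any two points q₀, q₁ on the unit sphere S^{2n+1} ⊂ ℂ^{n+1} are connected by a unit-speed magnetic geodesic of strength s: there exist ψ ∈ [0,π], a smooth curve γ : ℝ → ℂ^{n+1} satisfying γ''(t) − i·s·γ'(t) + (1 − s·cos ψ)·γ(t) = 0 with |γ(0)| = 1, |γ'(0)| = 1, Re⟨γ(0),γ'(0)⟩ = 0, Re⟨i·γ(0),γ'(0)⟩ = cos ψ, and times t₀, t₁ ∈ ℝ with γ(t₀) = q₀ and γ(t₁) = q₁. (In terms of the magnetic system (S^{2n+1},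 g, dα), this is the supercritical case: unit-speed strength s corresponds to kinetic energy k = 1/(2s²), and s < 2 corresponds to k > 1/8, the Mañé critical value.) -/
noncomputable section

open scoped Real

/-!
Undoing the rotation `e^{ist/2}` along the Hopf fibres turns magnetic geodesics into great circles:
if `q` and `p` are real-orthogonal unit vectors and `R` is chosen so that the initial velocity
`(s/2) i q + R p` has unit length, then `e^{ist/2} (cos (R t) q + sin (R t) p)` is a magnetic
geodesic. For `|s| < 2` such an `R > 0` exists for every `p` and depends continuously on it.

If `q₁` is off the Hopf fibre of `q₀`, then for every phase `z` the great circle arc from `q₀` to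
`z⁻¹ q₁` yields a magnetic geodesic from `q₀` to `e^{isT/2} z⁻¹ q₁`, where its duration `T = T(z)` is
continuous in `z`. The self-map `z ↦ e^{isT(z)/2}` of the circle factors through `ℝ`, so it has a
fixed point, and at that phase the geodesic hits `q₁`. If `q₁` is on the Hopf fibre of `q₀`, the
fibre itself is a magnetic geodesic.
-/

theorem exists_isFixedPt_comp_of_compactSpace {X : Type*} [TopologicalSpace X] [CompactSpace X]
    {g : X → ℝ} {e : ℝ → X} (hg : Continuous g) (he : Continuous e) :
    ∃ x, Function.IsFixedPt (e ∘ g) x := by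
  obtain ⟨M, hM⟩ := (isCompact_range hg).isBounded.exists_norm_le
  have hbound (x : X) : g x ∈ Set.Icc (-M) M := abs_le.1 (hM _ ⟨x, rfl⟩)
  obtain ⟨t, -, ht⟩ := exists_mem_Icc_isFixedPt_of_mapsTo (hg.comp he).continuousOn
    ((hbound (e 0)).1.trans (hbound (e 0)).2) fun t _ ↦ hbound (e t)
  exact ⟨e t, congrArg e ht⟩

section UnitTangent

open InnerProductGeometry RealInnerProductSpace

variable {V : Type*} [NormedAddCommGroup V] [InnerProductSpace ℝ V]

theorem sin_angle_ne_zero_of_linearIndependent {x y : V} (h : LinearIndependent ℝ ![x, y]) :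
    Real.sin (angle x y) ≠ 0 := by
  rw [Ne, sin_eq_zero_iff_angle_eq_zero_or_angle_eq_pi, angle_eq_zero_iff, angle_eq_pi_iff]
  rintro (⟨hx, r, -, rfl⟩ | ⟨hx, r, -, rfl⟩) <;>
    exact (LinearIndependent.pair_iff' hx).1 h r rfl

/-- The initial velocity of the unit-speed great circle arc from `x` to `y`, for unit vectors
`x ≠ ±y`; it has the junk value `0` when `y = ±x`. -/
def unitTangent (x y : V) : V :=
  (Real.sin (angle x y))⁻¹ • (y - Real.cos (angle x y) • x)

theorem cos_angle_smul_add_sin_angle_smul_unitTangent {x y : V} (h : Real.sin (angle x y) ≠ 0) :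
    Real.cos (angle x y) • x + Real.sin (angle x y) • unitTangent x y = y := by
  rw [unitTangent, smul_inv_smul₀ h, add_sub_cancel]

theorem inner_unitTangent {x y : V} (hx : ‖x‖ = 1) (hy : ‖y‖ = 1) :
    ⟪x, unitTangent x y⟫ = 0 := by
  rw [unitTangent, inner_smul_right, inner_sub_right, inner_smul_right, real_inner_self_eq_norm_sq,
    inner_eq_cos_angle_of_norm_eq_one hx hy, hx]
  ring

theorem norm_unitTangent {x y : V} (hx : ‖x‖ = 1) (hy : ‖y‖ = 1)
    (h : Real.sin (angle x y) ≠ 0) : ‖unitTangent x y‖ = 1 := by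
  have hsq : ‖y - Real.cos (angle x y) • x‖ ^ 2 = Real.sin (angle x y) ^ 2 := by
    rw [norm_sub_sq_real, inner_smul_right, real_inner_comm,
      inner_eq_cos_angle_of_norm_eq_one hx hy, norm_smul, mul_pow, hx, hy, Real.norm_eq_abs, sq_abs,
      Real.sin_sq]
    ring
  rw [← sq_eq_sq₀ (norm_nonneg _) zero_le_one, unitTangent, norm_smul, mul_pow, hsq, norm_inv,
    Real.norm_eq_abs, inv_pow, sq_abs, one_pow, inv_mul_cancel₀ (pow_ne_zero 2 h)]

theorem continuousAt_angle_right {x y : V} (hx : x ≠ 0) (hy : y ≠ 0) :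
    ContinuousAt (angle x) y :=
  (continuousAt_angle (x := (x, y)) hx hy).comp (by fun_prop : ContinuousAt (fun y ↦ (x, y)) y)

theorem continuousAt_unitTangent {x y : V} (hx : x ≠ 0) (hy : y ≠ 0)
    (h : Real.sin (angle x y) ≠ 0) : ContinuousAt (unitTangent x) y := by
  have hangle := continuousAt_angle_right hx hy
  unfold unitTangent
  fun_prop (disch := exact h)

end UnitTangent

section Frequency

/-- The angular speed `R` at which a great circle making angle `arccos k` with the Hopf fibre must
be traversed to become, after rotation along the fibres at angular speed `s / 2`, a unit-speed
curve: the larger root of `R² + s R k + s² / 4 = 1`, where `|s| < 2`. -/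
def magneticFrequency (s k : ℝ) : ℝ :=
  -(s * k / 2) + √((s * k / 2) ^ 2 + (1 - s ^ 2 / 4))

theorem magneticFrequency_pos {s : ℝ} (hs : |s| < 2) (k : ℝ) : 0 < magneticFrequency s k := by
  have hs' : s ^ 2 < 2 ^ 2 := sq_lt_sq' (abs_lt.1 hs).1 (abs_lt.1 hs).2
  have : s * k / 2 < √((s * k / 2) ^ 2 + (1 - s ^ 2 / 4)) :=
    Real.lt_sqrt_of_sq_lt (by linarith)
  rw [magneticFrequency]
  linarith

theorem magneticFrequency_equation {s : ℝ} (hs : |s| < 2) (k : ℝ) :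
    magneticFrequency s k ^ 2 + s * magneticFrequency s k * k + s ^ 2 / 4 = 1 := by
  have hs' : s ^ 2 < 2 ^ 2 := sq_lt_sq' (abs_lt.1 hs).1 (abs_lt.1 hs).2
  have hsqrt := Real.sq_sqrt (show 0 ≤ (s * k / 2) ^ 2 + (1 - s ^ 2 / 4) by nlinarith)
  rw [magneticFrequency]
  linear_combination hsqrt

theorem continuous_magneticFrequency (s : ℝ) : Continuous (magneticFrequency s) := by
  unfold magneticFrequency
  fun_prop

end Frequency

section MagneticGeodesic

open Complex (I)
open InnerProductGeometry RealInnerProductSpace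

variable {E : Type*} [NormedAddCommGroup E] [InnerProductSpace ℂ E]

/-- The notion `IsMagGeo` in an arbitrary complex inner product space; real inner products are real
parts of Hermitian ones, with `γ'(0)` in the conjugate-linear slot as in `herm`. -/
structure IsMagneticGeodesic (s ψ : ℝ) (γ : ℝ → E) : Prop where
  contDiff : ContDiff ℝ (⊤ : ℕ∞) γ
  equation (t : ℝ) : deriv (deriv γ) t - ((s : ℂ) * I) • deriv γ t
    + ((1 : ℂ) - (s : ℂ) * (Real.cos ψ : ℂ)) • γ t = 0
  norm_zero : ‖γ 0‖ = 1
  norm_deriv_zero : ‖deriv γ 0‖ = 1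
  re_inner_deriv_zero : (inner ℂ (deriv γ 0) (γ 0)).re = 0
  re_inner_deriv_I_smul_zero : (inner ℂ (deriv γ 0) (I • γ 0)).re = Real.cos ψ

theorem IsMagneticGeodesic.isMagGeo {n : ℕ} {s ψ : ℝ} {γ : ℝ → EuclideanSpace ℂ (Fin (n + 1))}
    (h : IsMagneticGeodesic s ψ γ) : IsMagGeo s ψ γ :=
  ⟨h.contDiff, h.equation, h.norm_zero, h.norm_deriv_zero, h.re_inner_deriv_zero,
    h.re_inner_deriv_I_smul_zero⟩

/-- The great circle through `q` in the direction `p`, traversed at angular speed `R` and rotated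
along the Hopf fibres at angular speed `s / 2`. -/
def rotatingGreatCircle (s R : ℝ) (q p : E) (t : ℝ) : E :=
  Circle.exp (s / 2 * t) • (Real.cos (R * t) • q + Real.sin (R * t) • p)

theorem rotatingGreatCircle_zero (s R : ℝ) (q p : E) : rotatingGreatCircle s R q p 0 = q := by
  simp [rotatingGreatCircle]

theorem contDiff_rotatingGreatCircle (s R : ℝ) (q p : E) {m : WithTop ℕ∞} :
    ContDiff ℝ m (rotatingGreatCircle s R q p) := by
  have hexp : ContDiff ℝ m fun t : ℝ ↦ (Circle.exp (s / 2 * t) : ℂ) :=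
    ((Complex.ofRealCLM.contDiff.comp (contDiff_const.mul contDiff_id)).mul contDiff_const).cexp
  exact hexp.smul (by fun_prop)

theorem deriv_rotatingGreatCircle (s R : ℝ) (q p : E) :
    deriv (rotatingGreatCircle s R q p) =
      rotatingGreatCircle s R ((s / 2) • I • q + R • p) ((s / 2) • I • p - R • q) := by
  funext t
  have hexp : HasDerivAt (fun t : ℝ ↦ (Circle.exp (s / 2 * t) : ℂ))
      (Circle.exp (s / 2 * t) * ((s / 2 : ℝ) * I)) t := by
    simp only [Circle.coe_exp]
    simpa using (((hasDerivAt_id t).const_mul (s / 2)).ofReal_comp.mul_const I).cexp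
  have hlin : HasDerivAt (fun t : ℝ ↦ R * t) R t := by
    simpa using (hasDerivAt_id t).const_mul R
  have hcircle : HasDerivAt (fun t : ℝ ↦ Real.cos (R * t) • q + Real.sin (R * t) • p)
      ((-Real.sin (R * t) * R) • q + (Real.cos (R * t) * R) • p) t :=
    (hlin.cos.smul_const q).add (hlin.sin.smul_const p)
  refine (hexp.smul hcircle).deriv.trans ?_
  simp only [rotatingGreatCircle, Circle.smul_def]
  match_scalars <;> push_cast [Complex.coe_algebraMap] <;> ring

theorem rotatingGreatCircle_equation (s R : ℝ) (q p : E) (t : ℝ) :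
    deriv (deriv (rotatingGreatCircle s R q p)) t
      - ((s : ℂ) * I) • deriv (rotatingGreatCircle s R q p) t
      + ((R ^ 2 - s ^ 2 / 4 : ℝ) : ℂ) • rotatingGreatCircle s R q p t = 0 := by
  simp only [deriv_rotatingGreatCircle, rotatingGreatCircle, Circle.smul_def]
  generalize (Circle.exp (s / 2 * t) : ℂ) = e
  match_scalars <;> push_cast [Complex.coe_algebraMap]
  · linear_combination (-(s ^ 2 / 4) * e * Complex.cos (R * t)) * Complex.I_sq
  · linear_combination (-(s ^ 2 / 4) * e * Complex.sin (R * t)) * Complex.I_sq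

attribute [local instance] InnerProductSpace.complexToReal

theorem norm_I_smul_add_smul_sq {q p : E} (hq : ‖q‖ = 1) (hp : ‖p‖ = 1) (a b : ℝ) :
    ‖a • I • q + b • p‖ ^ 2 = b ^ 2 + 2 * a * b * ⟪I • q, p⟫ + a ^ 2 := by
  have hIq : ‖I • q‖ = 1 := by rw [norm_smul, Complex.norm_I, one_mul, hq]
  rw [norm_add_sq_real, inner_smul_left, inner_smul_right, norm_smul _ (I • q), norm_smul _ p, hIq,
    hp, mul_one, mul_one, Real.norm_eq_abs, Real.norm_eq_abs, sq_abs, sq_abs, conj_trivial]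
  ring

theorem isMagneticGeodesic_rotatingGreatCircle {s R : ℝ} {q p : E} (hq : ‖q‖ = 1) (hp : ‖p‖ = 1)
    (hqp : ⟪q, p⟫ = 0) (hv : ‖(s / 2) • I • q + R • p‖ = 1) :
    IsMagneticGeodesic s (angle (I • q) ((s / 2) • I • q + R • p))
      (rotatingGreatCircle s R q p) := by
  set v : E := (s / 2) • I • q + R • p with hv_def
  have hIq : ‖I • q‖ = 1 := by rw [norm_smul, Complex.norm_I, one_mul, hq]
  have hcos : Real.cos (angle (I • q) v) = s / 2 + R * ⟪I • q, p⟫ := by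
    rw [← inner_eq_cos_angle_of_norm_eq_one hIq hv, hv_def, inner_add_right, inner_smul_right,
      inner_smul_right, real_inner_self_eq_norm_sq, hIq]
    ring
  have hcoeff : R ^ 2 - s ^ 2 / 4 = 1 - s * Real.cos (angle (I • q) v) := by
    have hspeed := norm_I_smul_add_smul_sq hq hp (s / 2) R
    rw [← hv_def, hv] at hspeed
    rw [hcos]
    linear_combination -hspeed
  have hderiv : deriv (rotatingGreatCircle s R q p) 0 = v := by
    rw [deriv_rotatingGreatCircle, rotatingGreatCircle_zero]
  refine ⟨contDiff_rotatingGreatCircle s R q p, fun t ↦ ?_, ?_, ?_, ?_, ?_⟩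
  · exact_mod_cast hcoeff ▸ rotatingGreatCircle_equation s R q p t
  · rw [rotatingGreatCircle_zero, hq]
  · rw [hderiv, hv]
  · rw [hderiv, rotatingGreatCircle_zero]
    change ⟪v, q⟫ = 0
    have hqIq : ⟪q, I • q⟫ = 0 := real_inner_I_smul_self ℂ q
    rw [real_inner_comm, hv_def, inner_add_right, inner_smul_right, inner_smul_right, hqIq, hqp,
      mul_zero, mul_zero, add_zero]
  · rw [hderiv, rotatingGreatCircle_zero]
    change ⟪v, I • q⟫ = Real.cos (angle (I • q) v)
    rw [real_inner_comm, inner_eq_cos_angle_of_norm_eq_one hIq hv]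

theorem exists_isMagneticGeodesic_circle_smul (s : ℝ) {q : E} (hq : ‖q‖ = 1) (z : Circle) :
    ∃ ψ ∈ Set.Icc 0 π, ∃ γ : ℝ → E,
      IsMagneticGeodesic s ψ γ ∧ γ 0 = q ∧ ∃ t, γ t = z • q := by
  obtain ⟨t, rfl⟩ := Circle.exp_surjective z
  have hIq : ‖I • q‖ = 1 := by rw [norm_smul, Complex.norm_I, one_mul, hq]
  refine ⟨_, ⟨angle_nonneg _ _, angle_le_pi _ _⟩, rotatingGreatCircle s (1 - s / 2) q (I • q),
    isMagneticGeodesic_rotatingGreatCircle hq hIq (real_inner_I_smul_self ℂ q) ?_,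
    rotatingGreatCircle_zero .., t, ?_⟩
  · rw [← add_smul, add_sub_cancel, one_smul, hIq]
  · have hfibre (x : ℝ) : Real.cos x • q + Real.sin x • I • q = Circle.exp x • q := by
      rw [Circle.smul_def, Circle.coe_exp, Complex.exp_mul_I]
      match_scalars
      push_cast [Complex.coe_algebraMap]
      ring
    rw [rotatingGreatCircle, hfibre, smul_smul, ← Circle.exp_add]
    ring_nf

/-- The time needed to traverse the great circle arc from `q` to `y` at the angular speed that makes
the rotated arc a magnetic geodesic of strength `s`. -/
def transitTime (s : ℝ) (q y : E) : ℝ :=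
  angle q y / magneticFrequency s ⟪I • q, unitTangent q y⟫

theorem continuousAt_transitTime {s : ℝ} (hs : |s| < 2) {q y : E} (hq : q ≠ 0) (hy : y ≠ 0)
    (h : Real.sin (angle q y) ≠ 0) : ContinuousAt (transitTime s q) y := by
  have htangent := continuousAt_unitTangent hq hy h
  have hfreq : ContinuousAt (fun y ↦ magneticFrequency s ⟪I • q, unitTangent q y⟫) y :=
    (continuous_magneticFrequency s).continuousAt.comp (by fun_prop)
  exact (continuousAt_angle_right hq hy).div hfreq (magneticFrequency_pos hs _).ne'

theorem exists_isMagneticGeodesic_transitTime {s : ℝ} (hs : |s| < 2) {q y : E} (hq : ‖q‖ = 1)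
    (hy : ‖y‖ = 1) (h : Real.sin (angle q y) ≠ 0) :
    ∃ ψ ∈ Set.Icc 0 π, ∃ γ : ℝ → E, IsMagneticGeodesic s ψ γ ∧ γ 0 = q ∧
      γ (transitTime s q y) = Circle.exp (s / 2 * transitTime s q y) • y := by
  set R := magneticFrequency s ⟪I • q, unitTangent q y⟫
  have hunit : ‖unitTangent q y‖ = 1 := norm_unitTangent hq hy h
  have hspeed : ‖(s / 2) • I • q + R • unitTangent q y‖ = 1 := by
    rw [← sq_eq_sq₀ (norm_nonneg _) zero_le_one, norm_I_smul_add_smul_sq hq hunit]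
    linear_combination magneticFrequency_equation hs ⟪I • q, unitTangent q y⟫
  refine ⟨_, ⟨angle_nonneg _ _, angle_le_pi _ _⟩, rotatingGreatCircle s R q (unitTangent q y),
    isMagneticGeodesic_rotatingGreatCircle hq hunit (inner_unitTangent hq hy) hspeed,
    rotatingGreatCircle_zero .., ?_⟩
  have harc : R * transitTime s q y = angle q y :=
    mul_div_cancel₀ _ (magneticFrequency_pos hs _).ne'
  rw [rotatingGreatCircle, harc, cos_angle_smul_add_sin_angle_smul_unitTangent h]

theorem exists_isMagneticGeodesic_of_linearIndependent {s : ℝ} (hs : |s| < 2) {q₀ q₁ : E}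
    (hq₀ : ‖q₀‖ = 1) (hq₁ : ‖q₁‖ = 1) (h : LinearIndependent ℂ ![q₀, q₁]) :
    ∃ ψ ∈ Set.Icc 0 π, ∃ γ : ℝ → E,
      IsMagneticGeodesic s ψ γ ∧ γ 0 = q₀ ∧ ∃ t, γ t = q₁ := by
  have hnorm (z : Circle) : ‖z⁻¹ • q₁‖ = 1 := by rw [Circle.norm_smul, hq₁]
  have hsin (z : Circle) : Real.sin (angle q₀ (z⁻¹ • q₁)) ≠ 0 := by
    have hz : LinearIndependent ℂ ![q₀, z⁻¹ • q₁] := by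
      simpa [Circle.smul_def] using (LinearIndependent.pair_smul_smul_iff isUnit_one
        (Circle.coe_ne_zero z⁻¹).isUnit).2 h
    exact sin_angle_ne_zero_of_linearIndependent (hz.restrict_scalars' ℝ)
  have hcont : Continuous fun z : Circle ↦ s / 2 * transitTime s q₀ (z⁻¹ • q₁) :=
    continuous_iff_continuousAt.2 fun z ↦ continuousAt_const.mul <|
      (continuousAt_transitTime hs (norm_ne_zero_iff.1 (by simp [hq₀]))
        (norm_ne_zero_iff.1 (by simp [hnorm])) (hsin z)).comp
          (f := fun z : Circle ↦ z⁻¹ • q₁) (by fun_prop)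
  obtain ⟨z, hz⟩ := exists_isFixedPt_comp_of_compactSpace hcont Circle.exp.continuous
  obtain ⟨ψ, hψ, γ, hγ, hγ₀, hγ₁⟩ :=
    exists_isMagneticGeodesic_transitTime hs hq₀ (hnorm z) (hsin z)
  refine ⟨ψ, hψ, γ, hγ, hγ₀, _, hγ₁.trans ?_⟩
  rw [show Circle.exp (s / 2 * transitTime s q₀ (z⁻¹ • q₁)) = z from hz, smul_inv_smul]

end MagneticGeodesic

theorem stmt_5_general {E : Type*} [NormedAddCommGroup E] [InnerProductSpace ℂ E] {s : ℝ}
    (hs : |s| < 2) {q₀ q₁ : E} (hq₀ : ‖q₀‖ = 1) (hq₁ : ‖q₁‖ = 1) :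
    ∃ ψ ∈ Set.Icc 0 π, ∃ γ : ℝ → E,
      IsMagneticGeodesic s ψ γ ∧ γ 0 = q₀ ∧ ∃ t, γ t = q₁ := by
  by_cases h : LinearIndependent ℂ ![q₀, q₁]
  · exact exists_isMagneticGeodesic_of_linearIndependent hs hq₀ hq₁ h
  · rw [LinearIndependent.pair_iff' (norm_ne_zero_iff.1 (by simp [hq₀]))] at h
    push Not at h
    obtain ⟨c, rfl⟩ := h
    have hc : ‖c‖ = 1 := by rwa [norm_smul, hq₀, mul_one] at hq₁
    exact exists_isMagneticGeodesic_circle_smul s hq₀ ⟨c, mem_sphere_zero_iff_norm.2 hc⟩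

/-- supercritical case `s < 2`: any two points of the unit sphere
are connected by a unit-speed magnetic geodesic of strength `s`. -/
theorem stmt_5 {n : ℕ} (s : ℝ) (hs : 0 ≤ s) (hs2 : s < 2)
    (q₀ q₁ : EuclideanSpace ℂ (Fin (n + 1)))
    (hq₀ : ‖q₀‖ = 1) (hq₁ : ‖q₁‖ = 1) :
    ∃ ψ ∈ Set.Icc (0 : ℝ) π, ∃ γ : ℝ → EuclideanSpace ℂ (Fin (n + 1)),
      IsMagGeo s ψ γ ∧ ∃ t₀ t₁ : ℝ, γ t₀ = q₀ ∧ γ t₁ = q₁ := by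
  obtain ⟨ψ, hψ, γ, hγ, hγ₀, t, hγt⟩ := stmt_5_general ((abs_of_nonneg hs).trans_lt hs2) hq₀ hq₁
  exact ⟨ψ, hψ, γ, hγ.isMagGeo, 0, t, hγ₀, hγt⟩
end
end
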